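/- arXiv:2504.17225 — 2 statements merged into one kernel-verified Lean document; each statement's English description precedes it below -/
import Mathlib

section
/- Let Φ be a finite, reduced, irreducible, crystallographic root system with base Δ, positive roots Φ⁺, highest root θ = Σ_{β∈Δ} m_β·β, and Coxeter number h = 1 + Σ_{β∈Δ} m_β. Then for every long simple root α ∈ Δ one has Σ_{γ∈Φ⁺, ⟨γ,α^∨⟩ = −1} ⟨α,γ^∨⟩ = 2 − h. In particular, this sum is even if and only if the Coxeter number h is even. -/
open scoped RealInnerProductSpace
open scoped Classical

noncomputable section

variable {V : Type*} [NormedAddCommGroup V] [InnerProductSpace ℝ V]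

/-- The coroot pairing `⟨x, γ^∨⟩ = 2(x,γ)/(γ,γ)`. -/
def corootPairing (x γ : V) : ℝ := 2 * ⟪x, γ⟫ / ⟪γ, γ⟫

/-- The reflection `s_γ(x) = x - ⟨x,γ^∨⟩γ` associated to a root `γ`. -/
def rootReflection (γ x : V) : V := x - corootPairing x γ • γ

/-- A finite, reduced, crystallographic root system `Φ` in a real inner product
space `V`, together with a base (set of simple roots) `Δ` and the integral
coefficients `coeff γ β` of each root `γ` on each simple root `β`. -/
structure RootSystemWithBase (V : Type*) [NormedAddCommGroup V]
    [InnerProductSpace ℝ V] : Type _ where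
  /-- the set of roots -/
  Φ : Finset V
  /-- the base (set of simple roots) -/
  Δ : Finset V
  /-- the coefficient of the root `γ` on the simple root `β` -/
  coeff : V → V → ℤ
  zero_not_mem : (0 : V) ∉ Φ
  spans : Submodule.span ℝ (Φ : Set V) = ⊤
  crystallographic : ∀ γ ∈ Φ, ∀ δ ∈ Φ, ∃ n : ℤ, corootPairing γ δ = n
  reflection_mem : ∀ γ ∈ Φ, ∀ δ ∈ Φ, rootReflection γ δ ∈ Φ
  reduced : ∀ γ ∈ Φ, ∀ c : ℝ, c • γ ∈ Φ → c = 1 ∨ c = -1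
  base_subset : Δ ⊆ Φ
  base_indep : LinearIndependent ℝ (fun β : (Δ : Set V) => (β : V))
  root_eq_sum : ∀ γ ∈ Φ, γ = ∑ β ∈ Δ, (coeff γ β : ℝ) • β
  root_sign : ∀ γ ∈ Φ, (∀ β ∈ Δ, 0 ≤ coeff γ β) ∨ (∀ β ∈ Δ, coeff γ β ≤ 0)

namespace RootSystemWithBase

variable (R : RootSystemWithBase V)

/-- The positive roots `Φ⁺` with respect to the base `Δ`. -/
def Pos : Finset V := R.Φ.filter fun γ => ∀ β ∈ R.Δ, 0 ≤ R.coeff γ β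

/-- The negative roots `Φ⁻ = -Φ⁺`. -/
def Neg : Finset V := R.Pos.image fun γ => -γ

/-- Irreducibility: `Φ` admits no decomposition into two nonempty mutually
orthogonal subsets. -/
def Irreducible : Prop :=
  ∀ S ⊆ R.Φ, (∀ γ ∈ S, ∀ δ ∈ R.Φ, δ ∉ S → ⟪γ, δ⟫ = 0) → S = ∅ ∨ S = R.Φ

/-- `θ` is the highest root: it is a root whose coefficients on the base
dominate those of every root. -/
def IsHighestRoot (θ : V) : Prop :=
  θ ∈ R.Φ ∧ ∀ γ ∈ R.Φ, ∀ β ∈ R.Δ, R.coeff γ β ≤ R.coeff θ β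

end RootSystemWithBase

namespace RootSystemWithBase

lemma cp_neg_left (x γ : V) : corootPairing (-x) γ = - corootPairing x γ := by
  simp [corootPairing, neg_div]

lemma cp_neg_right (x γ : V) : corootPairing x (-γ) = - corootPairing x γ := by
  simp [corootPairing, neg_div]

lemma refl_inner (δ x y : V) (hδ : δ ≠ 0) :
    ⟪rootReflection δ x, rootReflection δ y⟫ = ⟪x, y⟫ := by
  have h : ⟪δ, δ⟫ ≠ 0 := inner_self_ne_zero.2 hδ
  simp only [rootReflection, corootPairing, inner_sub_left, inner_sub_right,
    real_inner_smul_left, real_inner_smul_right, real_inner_comm δ y]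
  field_simp
  ring

lemma cp_refl (δ x y : V) (hδ : δ ≠ 0) :
    corootPairing (rootReflection δ x) (rootReflection δ y) = corootPairing x y := by
  simp only [corootPairing, refl_inner _ _ _ hδ]

lemma cp_self (δ : V) (hδ : δ ≠ 0) : corootPairing δ δ = 2 := by
  have h : ⟪δ, δ⟫ ≠ 0 := inner_self_ne_zero.2 hδ
  simp only [corootPairing]
  field_simp

lemma refl_self (δ : V) (hδ : δ ≠ 0) : rootReflection δ δ = -δ := by
  rw [rootReflection, cp_self _ hδ, two_smul]; abel

lemma refl_refl (δ x : V) (hδ : δ ≠ 0) : rootReflection δ (rootReflection δ x) = x := by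
  have h : corootPairing (rootReflection δ x) δ = - corootPairing x δ := by
    have := cp_refl δ x (-δ) hδ
    rw [cp_neg_right] at this
    rw [← this]
    congr 1
    have h2 := cp_self δ hδ
    rw [rootReflection, cp_neg_left, h2]
    simp only [neg_smul, two_smul]; abel
  conv_lhs => rw [rootReflection, h]
  rw [rootReflection]
  simp

variable (R : RootSystemWithBase V)

lemma ne_zero' {γ : V} (h : γ ∈ R.Φ) : γ ≠ 0 := by
  rintro rfl; exact R.zero_not_mem h

lemma neg_mem' {γ : V} (h : γ ∈ R.Φ) : -γ ∈ R.Φ := by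
  have := R.reflection_mem γ h γ h
  rwa [refl_self _ (R.ne_zero' h)] at this

lemma coeff_unique {γ : V} (h : γ ∈ R.Φ) (c : V → ℝ) (hc : γ = ∑ β ∈ R.Δ, c β • β)
    {β : V} (hβ : β ∈ R.Δ) : (R.coeff γ β : ℝ) = c β := by
  have hi : LinearIndepOn ℝ id (R.Δ : Set V) := R.base_indep
  rw [linearIndepOn_finset_iff] at hi
  have := hi (fun β => (R.coeff γ β : ℝ) - c β) (by
    simp only [sub_smul, Finset.sum_sub_distrib, id]
    rw [← R.root_eq_sum γ h, ← hc, sub_self]) β hβ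
  linarith

lemma coeff_add {γ δ ε : V} (hγ : γ ∈ R.Φ) (hδ : δ ∈ R.Φ) (hε : ε ∈ R.Φ) (t : ℝ)
    (h : ε = γ + t • δ) {β : V} (hβ : β ∈ R.Δ) :
    (R.coeff ε β : ℝ) = R.coeff γ β + t * R.coeff δ β := by
  apply R.coeff_unique hε (fun β => (R.coeff γ β : ℝ) + t * R.coeff δ β) _ hβ
  simp only [add_smul, Finset.sum_add_distrib, mul_smul]
  rw [← Finset.smul_sum, ← R.root_eq_sum γ hγ, ← R.root_eq_sum δ hδ, h]

lemma coeff_neg {γ : V} (hγ : γ ∈ R.Φ) {β : V} (hβ : β ∈ R.Δ) :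
    R.coeff (-γ) β = - R.coeff γ β := by
  have := R.coeff_add hγ hγ (R.neg_mem' hγ) (-2) (by rw [neg_smul, two_smul]; abel) hβ
  have h2 : (R.coeff (-γ) β : ℝ) = ((- R.coeff γ β : ℤ) : ℝ) := by push_cast; linarith
  exact_mod_cast h2

lemma coeff_base {α β : V} (hα : α ∈ R.Δ) (hβ : β ∈ R.Δ) :
    R.coeff α β = if β = α then 1 else 0 := by
  have := R.coeff_unique (R.base_subset hα) (fun β => if β = α then 1 else 0)
    (by simp [ite_smul, hα]) hβ
  by_cases h : β = α <;> simp [h] at this ⊢ <;> exact_mod_cast this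

lemma exists_coeff_ne {γ : V} (hγ : γ ∈ R.Φ) : ∃ β ∈ R.Δ, R.coeff γ β ≠ 0 := by
  by_contra! h
  apply R.ne_zero' hγ
  rw [R.root_eq_sum γ hγ]
  exact Finset.sum_eq_zero fun β hβ => by simp [h β hβ]

lemma mem_pos {γ : V} : γ ∈ R.Pos ↔ γ ∈ R.Φ ∧ ∀ β ∈ R.Δ, 0 ≤ R.coeff γ β := by
  simp [Pos]

lemma neg_mem_pos_iff {γ : V} (hγ : γ ∈ R.Φ) : -γ ∈ R.Pos ↔ γ ∉ R.Pos := by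
  simp only [mem_pos, hγ, R.neg_mem' hγ, true_and]
  obtain ⟨β, hβ, hne⟩ := R.exists_coeff_ne hγ
  constructor
  · intro h h'
    have h1 := h β hβ
    rw [R.coeff_neg hγ hβ] at h1
    have := h' β hβ
    omega
  · intro h β hβ
    rw [R.coeff_neg hγ hβ]
    have := ((R.root_sign γ hγ).resolve_left h) β hβ
    omega

lemma base_pos {α : V} (hα : α ∈ R.Δ) : α ∈ R.Pos := by
  rw [mem_pos]
  refine ⟨R.base_subset hα, fun β hβ => ?_⟩
  rw [R.coeff_base hα hβ]; split_ifs <;> simp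

lemma refl_pos {α γ : V} (hα : α ∈ R.Δ) (hγ : γ ∈ R.Pos.erase α) :
    rootReflection α γ ∈ R.Pos.erase α := by
  obtain ⟨hne, hp⟩ := Finset.mem_erase.1 hγ
  have hΦ := (R.mem_pos.1 hp).1
  have hαΦ := R.base_subset hα
  have hr := R.reflection_mem α hαΦ γ hΦ
  have hex : ∃ β ∈ R.Δ, β ≠ α ∧ 0 < R.coeff γ β := by
    by_contra! h
    have h0 : ∀ β ∈ R.Δ, β ≠ α → R.coeff γ β = 0 := fun β hβ hn =>
      le_antisymm (h β hβ hn) ((R.mem_pos.1 hp).2 β hβ)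
    have he : γ = (R.coeff γ α : ℝ) • α := by
      conv_lhs => rw [R.root_eq_sum γ hΦ]
      exact Finset.sum_eq_single_of_mem α hα fun β hβ hn => by simp [h0 β hβ hn]
    have h1 := R.reduced α hαΦ (R.coeff γ α : ℝ) (he ▸ hΦ)
    rcases h1 with h1 | h1
    · rw [h1, one_smul] at he; exact hne he
    · have := (R.mem_pos.1 hp).2 α hα
      have h2 : (0 : ℝ) ≤ R.coeff γ α := by exact_mod_cast this
      linarith
  obtain ⟨β, hβ, hβα, hc⟩ := hex
  have hco : R.coeff (rootReflection α γ) β = R.coeff γ β := by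
    have := R.coeff_add hΦ hαΦ hr (-corootPairing γ α)
      (by rw [rootReflection, neg_smul, sub_eq_add_neg]) hβ
    rw [R.coeff_base hα hβ] at this
    simp [hβα] at this
    exact this
  rw [Finset.mem_erase, mem_pos]
  refine ⟨?_, hr, ?_⟩
  · intro h
    rw [h, R.coeff_base hα hβ] at hco
    simp [hβα] at hco
    omega
  · rcases R.root_sign _ hr with h | h
    · exact h
    · have := h β hβ
      omega

lemma sum_pos_base {α : V} (hα : α ∈ R.Δ) : ∑ γ ∈ R.Pos, corootPairing α γ = 2 := by
  have hα0 := R.ne_zero' (R.base_subset hα)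
  rw [← Finset.add_sum_erase _ _ (R.base_pos hα), cp_self _ hα0]
  have : ∑ γ ∈ R.Pos.erase α, corootPairing α γ = ∑ γ ∈ R.Pos.erase α, - corootPairing α γ := by
    refine Finset.sum_bij' (fun γ _ => rootReflection α γ) (fun γ _ => rootReflection α γ)
      (fun γ h => R.refl_pos hα h) (fun γ h => R.refl_pos hα h)
      (fun γ _ => refl_refl _ _ hα0) (fun γ _ => refl_refl _ _ hα0) ?_
    intro γ _
    rw [← cp_refl α α γ hα0, refl_self α hα0, cp_neg_left]
  rw [Finset.sum_neg_distrib] at this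
  linarith

lemma sum_pos_root {θ : V} (hθ : θ ∈ R.Φ) :
    ∑ γ ∈ R.Pos, corootPairing θ γ = 2 * ∑ β ∈ R.Δ, (R.coeff θ β : ℝ) := by
  have h : ∀ γ, corootPairing θ γ = ∑ β ∈ R.Δ, (R.coeff θ β : ℝ) * corootPairing β γ := by
    intro γ
    conv_lhs => rw [R.root_eq_sum θ hθ]
    simp only [corootPairing, sum_inner, real_inner_smul_left, Finset.mul_sum, Finset.sum_div]
    exact Finset.sum_congr rfl fun β _ => by ring
  simp only [h]
  rw [Finset.sum_comm, Finset.mul_sum]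
  refine Finset.sum_congr rfl fun β hβ => ?_
  rw [← Finset.mul_sum, R.sum_pos_base hβ]; ring

/-- `f(x) = ∑_{γ ∈ Φ} |⟨x, γ^∨⟩|`. -/
def absSum (x : V) : ℝ := ∑ γ ∈ R.Φ, |corootPairing x γ|

lemma absSum_refl {δ : V} (hδ : δ ∈ R.Φ) (x : V) :
    R.absSum (rootReflection δ x) = R.absSum x := by
  have h0 := R.ne_zero' hδ
  refine Finset.sum_bij' (fun γ _ => rootReflection δ γ) (fun γ _ => rootReflection δ γ)
      (fun γ h => R.reflection_mem δ hδ γ h) (fun γ h => R.reflection_mem δ hδ γ h)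
      (fun γ _ => refl_refl _ _ h0) (fun γ _ => refl_refl _ _ h0) ?_
  intro γ _
  rw [← cp_refl δ _ γ h0, refl_refl _ _ h0]

lemma absSum_eq (x : V) : R.absSum x = 2 * ∑ γ ∈ R.Pos, |corootPairing x γ| := by
  have hs : R.Pos ⊆ R.Φ := fun γ h => (R.mem_pos.1 h).1
  rw [absSum, ← Finset.sum_sdiff hs, two_mul]
  congr 1
  refine Finset.sum_bij' (fun γ _ => -γ) (fun γ _ => -γ) ?_ ?_ (by simp) (by simp) ?_
  · intro γ h
    rw [Finset.mem_sdiff] at h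
    exact (R.neg_mem_pos_iff h.1).2 h.2
  · intro γ h
    rw [Finset.mem_sdiff]
    refine ⟨R.neg_mem' (hs h), fun h' => (R.neg_mem_pos_iff (hs h)).1 h' h⟩
  · intro γ _
    rw [cp_neg_right, abs_neg]

lemma exists_dominant (P : V → Prop)
    (hP : ∀ δ ∈ R.Φ, ∀ x ∈ R.Φ, P x → P (rootReflection δ x))
    {x : V} (hx : x ∈ R.Φ) (hPx : P x) :
    ∃ y ∈ R.Φ, P y ∧ ∀ β ∈ R.Δ, 0 ≤ ⟪y, β⟫ := by
  obtain ⟨y, hy, hmax⟩ := Finset.exists_max_image (R.Φ.filter P)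
    (fun y => ∑ β ∈ R.Δ, (R.coeff y β : ℝ)) ⟨x, by simp [hx, hPx]⟩
  rw [Finset.mem_filter] at hy
  refine ⟨y, hy.1, hy.2, fun β hβ => ?_⟩
  by_contra! hneg
  have hβΦ := R.base_subset hβ
  have hr := R.reflection_mem β hβΦ y hy.1
  have h1 := hmax _ (Finset.mem_filter.2 ⟨hr, hP β hβΦ y hy.1 hy.2⟩)
  have h2 : ∑ b ∈ R.Δ, (R.coeff (rootReflection β y) b : ℝ)
      = ∑ b ∈ R.Δ, (R.coeff y b : ℝ) + - corootPairing y β := by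
    rw [Finset.sum_congr rfl fun b hb => R.coeff_add hy.1 hβΦ hr (-corootPairing y β)
      (by rw [rootReflection, neg_smul, sub_eq_add_neg]) hb]
    rw [Finset.sum_add_distrib, ← Finset.mul_sum]
    congr 1
    rw [Finset.sum_congr rfl fun b hb => by rw [R.coeff_base hβ hb]]
    simp [hβ]
  have h3 : corootPairing y β < 0 := by
    have : 0 < ⟪β, β⟫ := real_inner_self_pos.2 (R.ne_zero' hβΦ)
    unfold corootPairing
    exact div_neg_of_neg_of_pos (by linarith) this
  linarith

variable {θ : V}

lemma inner_le_of_dominant (hθ : R.IsHighestRoot θ) {y γ : V} (hγ : γ ∈ R.Φ)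
    (hy : ∀ β ∈ R.Δ, 0 ≤ ⟪y, β⟫) : ⟪y, γ⟫ ≤ ⟪y, θ⟫ := by
  rw [R.root_eq_sum γ hγ, R.root_eq_sum θ hθ.1]
  simp only [inner_sum, real_inner_smul_right]
  refine Finset.sum_le_sum fun β hβ => ?_
  exact mul_le_mul_of_nonneg_right (by exact_mod_cast hθ.2 γ hγ β hβ) (hy β hβ)

lemma highest_pairing_nonneg (hθ : R.IsHighestRoot θ) {γ : V} (hγ : γ ∈ R.Pos) :
    0 ≤ corootPairing θ γ := by
  by_contra! hneg
  have hΦ := (R.mem_pos.1 hγ).1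
  have hr := R.reflection_mem γ hΦ θ hθ.1
  obtain ⟨β, hβ, hne⟩ := R.exists_coeff_ne hΦ
  have h0 := (R.mem_pos.1 hγ).2 β hβ
  have hpos : (0 : ℝ) < R.coeff γ β := by
    have : 0 < R.coeff γ β := by omega
    exact_mod_cast this
  have h1 := R.coeff_add hθ.1 hΦ hr (-corootPairing θ γ)
      (by rw [rootReflection, neg_smul, sub_eq_add_neg]) hβ
  have h2 : (R.coeff (rootReflection γ θ) β : ℝ) ≤ R.coeff θ β := by
    exact_mod_cast hθ.2 _ hr β hβ
  nlinarith

lemma highest_dominant (hθ : R.IsHighestRoot θ) {β : V} (hβ : β ∈ R.Δ) : 0 ≤ ⟪θ, β⟫ := by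
  have h := R.highest_pairing_nonneg hθ (R.base_pos hβ)
  have : 0 < ⟪β, β⟫ := real_inner_self_pos.2 (R.ne_zero' (R.base_subset hβ))
  unfold corootPairing at h
  by_contra! hneg
  have := div_neg_of_neg_of_pos (show 2 * ⟪θ, β⟫ < 0 by linarith) this
  linarith

lemma norm_le_highest (hθ : R.IsHighestRoot θ) {γ : V} (hγ : γ ∈ R.Φ) : ⟪γ, γ⟫ ≤ ⟪θ, θ⟫ := by
  obtain ⟨y, hy, hPy, hd⟩ := R.exists_dominant (fun x => ⟪x, x⟫ = ⟪γ, γ⟫)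
    (fun δ hδ x _ h => by simp only [refl_inner _ _ _ (R.ne_zero' hδ)]; exact h) hγ rfl
  have h1 := R.inner_le_of_dominant hθ hy hd
  have h2 := R.inner_le_of_dominant hθ hy (fun β hβ => R.highest_dominant hθ hβ)
  rw [real_inner_comm] at h2
  linarith

lemma absSum_long (hθ : R.IsHighestRoot θ) {α : V} (hα : α ∈ R.Φ) (hlong : ⟪α, α⟫ = ⟪θ, θ⟫) :
    R.absSum α = R.absSum θ := by
  obtain ⟨y, hy, ⟨hP1, hP2⟩, hd⟩ := R.exists_dominant
    (fun x => ⟪x, x⟫ = ⟪θ, θ⟫ ∧ R.absSum x = R.absSum α)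
    (fun δ hδ x _ h => by
      simp only [refl_inner _ _ _ (R.ne_zero' hδ), R.absSum_refl hδ]; exact h) hα ⟨hlong, rfl⟩
  have h1 := R.inner_le_of_dominant hθ hy hd
  have h3 : y - θ = 0 := by
    refine (inner_self_eq_zero (𝕜 := ℝ)).1 (le_antisymm ?_ real_inner_self_nonneg)
    simp only [inner_sub_left, inner_sub_right]
    rw [real_inner_comm y θ]
    linarith
  rw [← hP2, sub_eq_zero.1 h3]

end RootSystemWithBase

/-- For a finite, reduced, irreducible, crystallographic root
system `Φ` with base `Δ`, positive roots `Φ⁺`, highest root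
`θ = Σ_{β∈Δ} m_β·β` and Coxeter number `h = 1 + Σ_{β∈Δ} m_β`, and for every
long simple root `α ∈ Δ`, one has
`Σ_{γ∈Φ⁺, ⟨γ,α^∨⟩ = −1} ⟨α,γ^∨⟩ = 2 − h`; in particular, this sum is even if
and only if the Coxeter number `h` is even. -/
theorem sum_pairing_eq_two_sub_coxeterNumber
    (R : RootSystemWithBase V) (hirr : R.Irreducible)
    (θ : V) (hθ : R.IsHighestRoot θ)
    (α : V) (hα : α ∈ R.Δ) (hlong : ⟪α, α⟫ = ⟪θ, θ⟫) :
    (∑ γ ∈ R.Pos.filter (fun γ => corootPairing γ α = -1), corootPairing α γ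
        = 2 - (1 + ∑ β ∈ R.Δ, (R.coeff θ β : ℝ))) ∧
    ((∃ k : ℤ, ∑ γ ∈ R.Pos.filter (fun γ => corootPairing γ α = -1),
          corootPairing α γ = 2 * (k : ℝ))
        ↔ Even (1 + ∑ β ∈ R.Δ, R.coeff θ β)) := by
  have hαΦ := R.base_subset hα
  have hα0 : 0 < ⟪α, α⟫ := real_inner_self_pos.2 (R.ne_zero' hαΦ)
  have hA : ∑ γ ∈ R.Pos, |corootPairing α γ| = 2 * ∑ β ∈ R.Δ, (R.coeff θ β : ℝ) := by
    have h := R.absSum_long hθ hαΦ hlong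
    rw [R.absSum_eq, R.absSum_eq, Finset.sum_congr rfl fun γ hγ =>
      abs_of_nonneg (R.highest_pairing_nonneg hθ hγ), R.sum_pos_root hθ.1] at h
    linarith
  have hB := R.sum_pos_base hα
  have key : ∀ γ ∈ R.Pos, corootPairing α γ - |corootPairing α γ|
      = 2 * (if corootPairing γ α = -1 then corootPairing α γ else 0) := by
    intro γ hγ
    have hΦ := (R.mem_pos.1 hγ).1
    have hγ0 : 0 < ⟪γ, γ⟫ := real_inner_self_pos.2 (R.ne_zero' hΦ)
    have hc : ⟪α, γ⟫ = ⟪γ, α⟫ := real_inner_comm _ _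
    split_ifs with h
    · have h1 : ⟪α, γ⟫ < 0 := by
        rw [corootPairing, div_eq_iff hα0.ne'] at h
        rw [hc]; linarith
      have h2 : corootPairing α γ < 0 := by
        unfold corootPairing
        exact div_neg_of_neg_of_pos (by linarith) hγ0
      rw [abs_of_neg h2]; ring
    · have h2 : 0 ≤ corootPairing α γ := by
        unfold corootPairing
        refine div_nonneg ?_ hγ0.le
        by_contra! hneg
        obtain ⟨n, hn⟩ := R.crystallographic γ hΦ α hαΦ
        have hn1 : (n : ℝ) ≠ -1 := by rw [← hn]; exact h
        have hn' := hn
        rw [corootPairing, div_eq_iff hα0.ne'] at hn'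
        have hn0 : (n : ℝ) < 0 := by
          by_contra! h0
          have := mul_nonneg h0 hα0.le
          linarith
        have hn0' : n < 0 := by exact_mod_cast hn0
        have hn1' : n ≠ -1 := by exact_mod_cast hn1
        have hn2 : n ≤ -2 := by omega
        have hn2' : (n : ℝ) ≤ -2 := by exact_mod_cast hn2
        have hle := R.norm_le_highest hθ hΦ
        have h3 : γ + α = 0 := by
          refine (inner_self_eq_zero (𝕜 := ℝ)).1 (le_antisymm ?_ real_inner_self_nonneg)
          simp only [inner_add_left, inner_add_right]
          nlinarith
        rw [eq_neg_of_add_eq_zero_left h3] at hγ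
        exact (R.neg_mem_pos_iff hαΦ).1 hγ (R.base_pos hα)
      rw [abs_of_nonneg h2]; ring
  have main : ∑ γ ∈ R.Pos.filter (fun γ => corootPairing γ α = -1), corootPairing α γ
        = 2 - (1 + ∑ β ∈ R.Δ, (R.coeff θ β : ℝ)) := by
    have h := Finset.sum_congr rfl key
    rw [Finset.sum_sub_distrib, hA, hB, ← Finset.mul_sum, ← Finset.sum_filter] at h
    linarith
  refine ⟨main, ?_⟩
  rw [main]
  constructor
  · rintro ⟨k, hk⟩
    have : 2 - (1 + ∑ β ∈ R.Δ, R.coeff θ β) = 2 * k := by exact_mod_cast hk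
    exact ⟨1 - k, by omega⟩
  · rintro ⟨k, hk⟩
    refine ⟨1 - k, ?_⟩
    have : 2 - (1 + ∑ β ∈ R.Δ, R.coeff θ β) = 2 * (1 - k) := by omega
    exact_mod_cast this


end
end

section
/- Let Φ be a finite, reduced, irreducible, crystallographic root system with base Δ, positive roots Φ⁺, and highest root θ = Σ_{β∈Δ} m_β·β. Then for every long simple root α ∈ Δ: (i) the number of long positive roots γ with ⟨γ,α^∨⟩ = −1 equals (Σ_{β∈Δ, β long} m_β) − 1, and (ii) the number of short positive roots γ with ⟨γ,α^∨⟩ = −1 equals Σ_{β∈Δ, β short} m_β·(β,β)/(θ,θ). -/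
open scoped RealInnerProductSpace
open scoped Classical

noncomputable section

variable {V : Type*} [NormedAddCommGroup V] [InnerProductSpace ℝ V]

namespace RootSystemWithBase

theorem aux_inner_pos (R : RootSystemWithBase V) {γ : V} (h : γ ∈ R.Φ) : 0 < ⟪γ, γ⟫ :=
  real_inner_self_pos.2 (fun h0 => R.zero_not_mem (h0 ▸ h))

theorem aux_coeff_unique (R : RootSystemWithBase V) {γ : V} (h : γ ∈ R.Φ) (c : V → ℝ)
    (hc : γ = ∑ β ∈ R.Δ, c β • β) : ∀ β ∈ R.Δ, (R.coeff γ β : ℝ) = c β := by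
  have hi := linearIndepOn_finset_iff.1 (show LinearIndepOn ℝ id (R.Δ : Set V) from R.base_indep)
  intro β hβ
  have := hi (fun β => (R.coeff γ β : ℝ) - c β) (by
    simp only [sub_smul, Finset.sum_sub_distrib, id]
    rw [← R.root_eq_sum γ h, ← hc, sub_self]) β hβ
  linarith

theorem aux_coeff_add (R : RootSystemWithBase V) {γ β : V} (h : γ ∈ R.Φ) (hβ : β ∈ R.Δ) (k : ℝ)
    (h' : γ + k • β ∈ R.Φ) : ∀ δ ∈ R.Δ,
    (R.coeff (γ + k • β) δ : ℝ) = R.coeff γ δ + if δ = β then k else 0 := by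
  apply R.aux_coeff_unique h'
  simp only [add_smul, Finset.sum_add_distrib, ite_smul, zero_smul, Finset.sum_ite_eq', hβ, if_true]
  rw [← R.root_eq_sum γ h]

theorem aux_coeff_simple (R : RootSystemWithBase V) {β : V} (hβ : β ∈ R.Δ) : ∀ δ ∈ R.Δ,
    (R.coeff β δ : ℝ) = if δ = β then 1 else 0 := by
  apply R.aux_coeff_unique (R.base_subset hβ)
  simp [ite_smul, hβ]

theorem aux_coeff_smul_simple (R : RootSystemWithBase V) {β : V} (hβ : β ∈ R.Δ) (k : ℝ)
    (h : k • β ∈ R.Φ) : (R.coeff (k • β) β : ℝ) = k := by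
  have := R.aux_coeff_unique h (fun δ => if δ = β then k else 0)
    (by simp [ite_smul, hβ]) β hβ
  simpa using this

theorem aux_refl_inner {β : V} (hβ : ⟪β, β⟫ ≠ 0) (x y : V) :
    ⟪rootReflection β x, rootReflection β y⟫ = ⟪x, y⟫ := by
  simp only [rootReflection, corootPairing, inner_sub_left, inner_sub_right, inner_smul_left,
    inner_smul_right, real_inner_comm β x, real_inner_comm β y, RCLike.conj_to_real]
  rw [real_inner_comm x β]
  field_simp
  ring

theorem aux_refl_refl {β : V} (hβ : ⟪β, β⟫ ≠ 0) (x : V) :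
    rootReflection β (rootReflection β x) = x := by
  have : corootPairing (rootReflection β x) β = - corootPairing x β := by
    simp only [rootReflection, corootPairing, inner_sub_left, inner_smul_left,
      RCLike.conj_to_real]
    field_simp
    ring
  rw [rootReflection, this, rootReflection]
  simp

theorem aux_refl_eq (β x : V) :
    rootReflection β x = x + (- corootPairing x β) • β := by
  rw [rootReflection, neg_smul, sub_eq_add_neg]

theorem aux_inner_mono (R : RootSystemWithBase V) {γ δ x : V} (h : γ ∈ R.Φ) (h' : δ ∈ R.Φ)
    (hle : ∀ β ∈ R.Δ, R.coeff γ β ≤ R.coeff δ β) (hx : ∀ β ∈ R.Δ, 0 ≤ ⟪x, β⟫) :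
    ⟪x, γ⟫ ≤ ⟪x, δ⟫ := by
  rw [R.root_eq_sum γ h, R.root_eq_sum δ h', inner_sum, inner_sum]
  refine Finset.sum_le_sum fun β hβ => ?_
  rw [inner_smul_right, inner_smul_right]
  exact mul_le_mul_of_nonneg_right (by exact_mod_cast hle β hβ) (hx β hβ)

theorem aux_pairing_pos (R : RootSystemWithBase V) {γ β : V} (hβ : β ∈ R.Δ) (h : ⟪γ, β⟫ < 0) :
    0 < - corootPairing γ β := by
  have := R.aux_inner_pos (R.base_subset hβ)
  rw [corootPairing, ← neg_div]
  exact div_pos (by linarith) this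

theorem aux_dom (R : RootSystemWithBase V) {θ : V} (hθ : R.IsHighestRoot θ) :
    ∀ β ∈ R.Δ, 0 ≤ ⟪θ, β⟫ := by
  intro β hβ
  by_contra! hlt
  have hk := R.aux_pairing_pos hβ hlt
  have hm := R.reflection_mem β (R.base_subset hβ) θ hθ.1
  have hle := hθ.2 _ hm β hβ
  rw [aux_refl_eq] at hm hle
  have := R.aux_coeff_add hθ.1 hβ _ hm β hβ
  simp only [if_true] at this
  have h2 : (R.coeff (θ + -corootPairing θ β • β) β : ℝ) ≤ R.coeff θ β := by exact_mod_cast hle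
  linarith

/-- Height. -/
def auxHt (R : RootSystemWithBase V) (γ : V) : ℤ := ∑ β ∈ R.Δ, R.coeff γ β

theorem aux_ht_le (R : RootSystemWithBase V) {θ γ : V} (hθ : R.IsHighestRoot θ) (h : γ ∈ R.Φ) :
    R.auxHt γ ≤ R.auxHt θ := Finset.sum_le_sum fun β hβ => hθ.2 γ h β hβ

theorem aux_ht_lt (R : RootSystemWithBase V) {γ β : V} (h : γ ∈ R.Φ) (hβ : β ∈ R.Δ)
    (hlt : ⟪γ, β⟫ < 0) : R.auxHt γ < R.auxHt (rootReflection β γ) := by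
  have hk := R.aux_pairing_pos hβ hlt
  have hm := R.reflection_mem β (R.base_subset hβ) γ h
  rw [aux_refl_eq] at hm ⊢
  have := R.aux_coeff_add h hβ _ hm
  have h2 : (R.auxHt (γ + -corootPairing γ β • β) : ℝ) = R.auxHt γ + -corootPairing γ β := by
    unfold auxHt
    push_cast
    rw [Finset.sum_congr rfl this, Finset.sum_add_distrib]
    simp [hβ]
  have : (R.auxHt γ : ℝ) < R.auxHt (γ + -corootPairing γ β • β) := by linarith
  exact_mod_cast this

/-- Induction towards the dominant chamber. -/
theorem aux_induct (R : RootSystemWithBase V) {θ : V} (hθ : R.IsHighestRoot θ) (Q : V → Prop)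
    (hdom : ∀ γ ∈ R.Φ, (∀ β ∈ R.Δ, 0 ≤ ⟪γ, β⟫) → Q γ)
    (hstep : ∀ γ ∈ R.Φ, ∀ β ∈ R.Δ, ⟪γ, β⟫ < 0 → Q (rootReflection β γ) → Q γ) :
    ∀ γ ∈ R.Φ, Q γ := by
  suffices H : ∀ n : ℕ, ∀ γ ∈ R.Φ, (R.auxHt θ - R.auxHt γ).toNat = n → Q γ from
    fun γ h => H _ γ h rfl
  intro n
  induction n using Nat.strong_induction_on with
  | _ n ih =>
    intro γ h hn
    by_cases hd : ∀ β ∈ R.Δ, 0 ≤ ⟪γ, β⟫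
    · exact hdom γ h hd
    · push Not at hd
      obtain ⟨β, hβ, hlt⟩ := hd
      have hm := R.reflection_mem β (R.base_subset hβ) γ h
      have h1 := R.aux_ht_lt h hβ hlt
      have h2 := R.aux_ht_le hθ hm
      exact hstep γ h β hβ hlt (ih _ (by omega) _ hm rfl)

theorem aux_dom_le (R : RootSystemWithBase V) {θ γ : V} (hθ : R.IsHighestRoot θ) (h : γ ∈ R.Φ)
    (hd : ∀ β ∈ R.Δ, 0 ≤ ⟪γ, β⟫) : ⟪γ, γ⟫ ≤ ⟪γ, θ⟫ ∧ ⟪γ, θ⟫ ≤ ⟪θ, θ⟫ := by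
  refine ⟨R.aux_inner_mono h hθ.1 (hθ.2 γ h) hd, ?_⟩
  rw [real_inner_comm]
  exact R.aux_inner_mono h hθ.1 (hθ.2 γ h) (R.aux_dom hθ)

theorem aux_norm_le (R : RootSystemWithBase V) {θ : V} (hθ : R.IsHighestRoot θ) :
    ∀ γ ∈ R.Φ, ⟪γ, γ⟫ ≤ ⟪θ, θ⟫ := by
  apply R.aux_induct hθ
  · intro γ h hd
    have := R.aux_dom_le hθ h hd
    linarith
  · intro γ h β hβ _ hq
    rwa [aux_refl_inner (R.aux_inner_pos (R.base_subset hβ)).ne'] at hq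

theorem aux_eq_of_dom (R : RootSystemWithBase V) {θ γ : V} (hθ : R.IsHighestRoot θ) (h : γ ∈ R.Φ)
    (hd : ∀ β ∈ R.Δ, 0 ≤ ⟪γ, β⟫) (hl : ⟪γ, γ⟫ = ⟪θ, θ⟫) : γ = θ := by
  have := R.aux_dom_le hθ h hd
  rw [← sub_eq_zero, ← inner_self_eq_zero (𝕜 := ℝ), inner_sub_left, inner_sub_right,
    inner_sub_right, real_inner_comm γ θ]
  linarith

theorem aux_mem_pos (R : RootSystemWithBase V) {γ : V} :
    γ ∈ R.Pos ↔ γ ∈ R.Φ ∧ ∀ β ∈ R.Δ, 0 ≤ R.coeff γ β := by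
  simp [Pos]

theorem aux_simple_pos (R : RootSystemWithBase V) {β : V} (hβ : β ∈ R.Δ) : β ∈ R.Pos := by
  refine R.aux_mem_pos.2 ⟨R.base_subset hβ, fun δ hδ => ?_⟩
  have := R.aux_coeff_simple hβ δ hδ
  have h : (0 : ℝ) ≤ R.coeff β δ := by rw [this]; split_ifs <;> norm_num
  exact_mod_cast h

theorem aux_neg_not_pos (R : RootSystemWithBase V) {β : V} (hβ : β ∈ R.Δ) : -β ∉ R.Pos := by
  intro h
  obtain ⟨h1, h2⟩ := R.aux_mem_pos.1 h
  have h3 := h2 β hβ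
  rw [← neg_one_smul ℝ β] at h1 h3
  have h4 := R.aux_coeff_smul_simple hβ _ h1
  have : (0 : ℝ) ≤ R.coeff ((-1 : ℝ) • β) β := by exact_mod_cast h3
  linarith

theorem aux_refl_pos (R : RootSystemWithBase V) {β δ : V} (hβ : β ∈ R.Δ) (hδ : δ ∈ R.Pos)
    (hne : δ ≠ β) : rootReflection β δ ∈ R.Pos := by
  obtain ⟨h1, h2⟩ := R.aux_mem_pos.1 hδ
  have hm := R.reflection_mem β (R.base_subset hβ) δ h1
  refine R.aux_mem_pos.2 ⟨hm, ?_⟩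
  rcases R.root_sign _ hm with h | h
  · exact h
  exfalso
  rw [aux_refl_eq] at hm h
  have hz : ∀ ε ∈ R.Δ, ε ≠ β → R.coeff δ ε = 0 := by
    intro ε hε hn
    have h3 := R.aux_coeff_add h1 hβ _ hm ε hε
    simp only [hn, if_false, add_zero] at h3
    have h4 := h ε hε
    have h5 := h2 ε hε
    norm_cast at h3
    omega
  have h6 : δ = (R.coeff δ β : ℝ) • β := by
    conv_lhs => rw [R.root_eq_sum δ h1]
    apply Finset.sum_eq_single_of_mem β hβ
    intro ε hε hn
    rw [hz ε hε hn]; simp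
  have h7 : (R.coeff δ β : ℝ) • β ∈ R.Φ := h6 ▸ h1
  rcases R.reduced β (R.base_subset hβ) _ h7 with h8 | h8
  · rw [h8, one_smul] at h6; exact hne h6
  · rw [h8, neg_one_smul] at h6
    exact R.aux_neg_not_pos hβ (h6 ▸ hδ)

theorem aux_pairing_eq (R : RootSystemWithBase V) {θ γ β : V} (hθ : R.IsHighestRoot θ)
    (h : γ ∈ R.Pos) (hl : ⟪γ, γ⟫ = ⟪θ, θ⟫) (hβ : β ∈ R.Δ) (hlt : ⟪γ, β⟫ < 0) :
    corootPairing β γ = -1 := by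
  have h1 := (R.aux_mem_pos.1 h).1
  have hb := R.base_subset hβ
  obtain ⟨n, hn⟩ := R.crystallographic β hb γ h1
  have hp := R.aux_inner_pos h1
  have hle := R.aux_norm_le hθ β hb
  have hn2 := hn
  rw [corootPairing, div_eq_iff hp.ne', real_inner_comm] at hn2
  have hneg : n < 0 := by
    by_contra! h0
    have : (0 : ℝ) ≤ n := by exact_mod_cast h0
    nlinarith
  have hgt : -2 < n := by
    by_contra! h0
    have h0' : (n : ℝ) ≤ -2 := by exact_mod_cast h0
    have h3 : ⟪γ + β, γ + β⟫ ≤ 0 := by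
      rw [inner_add_left, inner_add_right, inner_add_right, real_inner_comm γ β]
      nlinarith
    have h4 : γ + β = 0 := by
      rw [← inner_self_eq_zero (𝕜 := ℝ)]
      exact le_antisymm h3 real_inner_self_nonneg
    exact R.aux_neg_not_pos hβ (eq_neg_of_add_eq_zero_left h4 ▸ h)
  have : n = -1 := by omega
  rw [hn, this]; norm_num

theorem aux_pairing_refl {β : V} (hβ : ⟪β, β⟫ ≠ 0) (x y : V) :
    corootPairing (rootReflection β x) (rootReflection β y) = corootPairing x y := by
  simp only [corootPairing, aux_refl_inner hβ]

/-- The set counted. -/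
def auxN (R : RootSystemWithBase V) (P : ℝ → Prop) (γ : V) : Finset V :=
  R.Pos.filter fun δ => P ⟪δ, δ⟫ ∧ corootPairing δ γ = -1

theorem aux_N_step (R : RootSystemWithBase V) (P : ℝ → Prop) {γ β : V}
    (hβ : β ∈ R.Δ) (hp : corootPairing β γ = -1) :
    (R.auxN P γ).card = (R.auxN P (rootReflection β γ)).card + if P ⟪β, β⟫ then 1 else 0 := by
  have hb := (R.aux_inner_pos (R.base_subset hβ)).ne'
  have hself : rootReflection β β = -β := by
    have : corootPairing β β = 2 := by rw [corootPairing]; field_simp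
    rw [rootReflection, this, two_smul]; abel
  have hnotmem : β ∉ R.auxN P (rootReflection β γ) := by
    intro hmem
    have h2 := (Finset.mem_filter.1 hmem).2.2
    rw [← aux_pairing_refl hb, aux_refl_refl hb, hself] at h2
    have : corootPairing (-β) γ = - corootPairing β γ := by
      simp [corootPairing, inner_neg_left, neg_div]
    rw [this, hp] at h2
    norm_num at h2
  have hcard : ((R.auxN P γ).erase β).card = (R.auxN P (rootReflection β γ)).card := by
    refine Finset.card_bij' (fun δ _ => rootReflection β δ) (fun δ _ => rootReflection β δ)
      ?_ ?_ (fun δ _ => aux_refl_refl hb δ) (fun δ _ => aux_refl_refl hb δ)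
    · intro δ hδ
      obtain ⟨hne, hδ⟩ := Finset.mem_erase.1 hδ
      obtain ⟨h1, h2, h3⟩ := Finset.mem_filter.1 hδ
      refine Finset.mem_filter.2 ⟨R.aux_refl_pos hβ h1 hne, ?_, ?_⟩
      · rwa [aux_refl_inner hb]
      · rwa [aux_pairing_refl hb]
    · intro δ hδ
      have hne : δ ≠ β := fun h => hnotmem (h ▸ hδ)
      obtain ⟨h1, h2, h3⟩ := Finset.mem_filter.1 hδ
      refine Finset.mem_erase.2 ⟨?_, Finset.mem_filter.2 ⟨R.aux_refl_pos hβ h1 hne, ?_, ?_⟩⟩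
      · intro h
        have h4 := aux_refl_refl hb δ
        rw [h, hself] at h4
        exact R.aux_neg_not_pos hβ (h4 ▸ h1)
      · rwa [aux_refl_inner hb]
      · rwa [← aux_pairing_refl hb, aux_refl_refl hb]
  rw [← hcard]
  split_ifs with hP
  · refine (Finset.card_erase_add_one (Finset.mem_filter.2 ⟨R.aux_simple_pos hβ, hP, hp⟩)).symm
  · rw [Finset.erase_eq_of_notMem, add_zero]
    exact fun h => hP (Finset.mem_filter.1 h).2.1

theorem aux_main (R : RootSystemWithBase V) {θ : V} (hθ : R.IsHighestRoot θ) (P : ℝ → Prop) :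
    ∀ γ ∈ R.Φ, (γ ∈ R.Pos → ⟪γ, γ⟫ = ⟪θ, θ⟫ → ((R.auxN P γ).card : ℝ) =
      ∑ β ∈ R.Δ.filter fun β => P ⟪β, β⟫,
        ((R.coeff θ β : ℝ) - R.coeff γ β) * (⟪β, β⟫ / ⟪θ, θ⟫)) := by
  have ht := R.aux_inner_pos hθ.1
  apply R.aux_induct hθ
  · intro γ h hd _ hl
    obtain rfl := R.aux_eq_of_dom hθ h hd hl
    simp only [sub_self, zero_mul, Finset.sum_const_zero, Nat.cast_eq_zero, Finset.card_eq_zero]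
    refine Finset.filter_eq_empty_iff.2 fun δ hδ => ?_
    rintro ⟨-, h2⟩
    obtain ⟨h3, h4⟩ := R.aux_mem_pos.1 hδ
    have h5 : 0 ≤ ⟪δ, γ⟫ := by
      rw [real_inner_comm, R.root_eq_sum δ h3, inner_sum]
      refine Finset.sum_nonneg fun β hβ => ?_
      rw [inner_smul_right]
      exact mul_nonneg (by exact_mod_cast h4 β hβ) (hd β hβ)
    have h6 : 0 ≤ corootPairing δ γ := by
      rw [corootPairing]; positivity
    linarith
  · intro γ h β hβ hlt ih hpos hl
    have hp := R.aux_pairing_eq hθ hpos hl hβ hlt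
    have hb := R.aux_inner_pos (R.base_subset hβ)
    have hne : γ ≠ β := by
      rintro rfl
      linarith
    have ih := ih (R.aux_refl_pos hβ hpos hne) (by rw [aux_refl_inner hb.ne', hl])
    have hm := R.reflection_mem β (R.base_subset hβ) γ h
    have hc : ∀ δ ∈ R.Δ, (R.coeff (rootReflection β γ) δ : ℝ)
        = R.coeff γ δ + if δ = β then -corootPairing γ β else 0 := by
      rw [aux_refl_eq] at hm ⊢
      exact R.aux_coeff_add h hβ _ hm
    have hk : (-corootPairing γ β) * (⟪β, β⟫ / ⟪θ, θ⟫) = 1 := by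
      rw [corootPairing, hl, div_eq_iff ht.ne', real_inner_comm] at hp
      rw [corootPairing]
      field_simp
      linarith
    rw [R.aux_N_step P hβ hp, Nat.cast_add, ih]
    have : ∀ δ ∈ R.Δ.filter fun β => P ⟪β, β⟫,
        ((R.coeff θ δ : ℝ) - R.coeff (rootReflection β γ) δ) * (⟪δ, δ⟫ / ⟪θ, θ⟫)
        = ((R.coeff θ δ : ℝ) - R.coeff γ δ) * (⟪δ, δ⟫ / ⟪θ, θ⟫) - if δ = β then 1 else 0 := by
      intro δ hδ
      rw [hc δ (Finset.mem_filter.1 hδ).1]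
      split_ifs with h0
      · subst h0
        linear_combination -hk
      · ring
    rw [Finset.sum_congr rfl this, Finset.sum_sub_distrib, Finset.sum_ite_eq']
    simp [hβ]

end RootSystemWithBase

/-- For a finite, reduced, irreducible, crystallographic root
system `Φ` with base `Δ`, positive roots `Φ⁺` and highest root
`θ = Σ_{β∈Δ} m_β·β`, and for every long simple root `α ∈ Δ`:
(i) the number of long positive roots `γ` with `⟨γ,α^∨⟩ = −1` equals
`(Σ_{β∈Δ long} m_β) − 1`, and
(ii) the number of short positive roots `γ` with `⟨γ,α^∨⟩ = −1` equals
`Σ_{β∈Δ short} m_β·(β,β)/(θ,θ)`. -/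
theorem card_long_and_short_roots_pairing_neg_one
    (R : RootSystemWithBase V) (hirr : R.Irreducible)
    (θ : V) (hθ : R.IsHighestRoot θ)
    (α : V) (hα : α ∈ R.Δ) (hlong : ⟪α, α⟫ = ⟪θ, θ⟫) :
    (((R.Pos.filter fun γ => ⟪γ, γ⟫ = ⟪θ, θ⟫ ∧ corootPairing γ α = -1).card : ℤ)
        = (∑ β ∈ R.Δ.filter fun β => ⟪β, β⟫ = ⟪θ, θ⟫, R.coeff θ β) - 1) ∧
    (((R.Pos.filter fun γ => ⟪γ, γ⟫ ≠ ⟪θ, θ⟫ ∧ corootPairing γ α = -1).card : ℝ)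
        = ∑ β ∈ R.Δ.filter fun β => ⟪β, β⟫ ≠ ⟪θ, θ⟫,
            (R.coeff θ β : ℝ) * (⟪β, β⟫ / ⟪θ, θ⟫)) := by
  have hpos := R.aux_simple_pos hα
  have hmain := fun P => R.aux_main hθ P α (R.base_subset hα) hpos hlong
  have ht := R.aux_inner_pos hθ.1
  constructor
  · have h := hmain (fun x => x = ⟪θ, θ⟫)
    have h2 : ∀ β ∈ R.Δ.filter fun β => ⟪β, β⟫ = ⟪θ, θ⟫,
        ((R.coeff θ β : ℝ) - R.coeff α β) * (⟪β, β⟫ / ⟪θ, θ⟫)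
        = (R.coeff θ β : ℝ) - if β = α then 1 else 0 := by
      intro β hβ
      obtain ⟨h3, h4⟩ := Finset.mem_filter.1 hβ
      rw [h4, div_self ht.ne', mul_one, R.aux_coeff_simple hα β h3]
    rw [Finset.sum_congr rfl h2, Finset.sum_sub_distrib, Finset.sum_ite_eq',
      if_pos (Finset.mem_filter.2 ⟨hα, hlong⟩)] at h
    unfold RootSystemWithBase.auxN at h
    exact_mod_cast h
  · have h := hmain (fun x => x ≠ ⟪θ, θ⟫)
    unfold RootSystemWithBase.auxN at h
    suffices h5 : ∑ β ∈ R.Δ.filter fun β => ⟪β, β⟫ ≠ ⟪θ, θ⟫,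
          (R.coeff θ β : ℝ) * (⟪β, β⟫ / ⟪θ, θ⟫)
        = ∑ β ∈ R.Δ.filter fun β => ⟪β, β⟫ ≠ ⟪θ, θ⟫,
          ((R.coeff θ β : ℝ) - R.coeff α β) * (⟪β, β⟫ / ⟪θ, θ⟫) by
      rw [h5]
      convert h
    refine Finset.sum_congr rfl fun β hβ => ?_
    obtain ⟨h3, h4⟩ := Finset.mem_filter.1 hβ
    rw [R.aux_coeff_simple hα β h3, if_neg (by rintro rfl; exact h4 hlong), sub_zero]

end
end
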